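/- For every n ≥ 1, the immersion poset on partitions of n contains a chain of length ⌊n/2⌋; that is, there exist partitions μ_0, μ_1, …, μ_{⌊n/2⌋} of n with μ_0 <_I μ_1 <_I ⋯ <_I μ_{⌊n/2⌋}. In particular, the rank of the immersion poset (P(n), ≤_I) is at least ⌊n/2⌋. -/

import Mathlib

open Finset MvPolynomial

/-- A partition of `n`, represented as a weakly decreasing list of positive
integers summing to `n`. -/
def IsPartitionOf (n : ℕ) (l : List ℕ) : Prop :=
  l.Pairwise (· ≥ ·) ∧ (∀ x ∈ l, 0 < x) ∧ l.sum = n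

/-- `T : ℕ → ℕ → ℕ` is a semistandard Young tableau of shape `l`
(rows weakly increase, columns strictly increase, entries are `0` outside
of the diagram; entries are 0-indexed, so entry value `k` stands for the
letter `k+1`). -/
def IsSSYT (l : List ℕ) (T : ℕ → ℕ → ℕ) : Prop :=
  (∀ i j1 j2, j1 ≤ j2 → j2 < l.getD i 0 → T i j1 ≤ T i j2) ∧
  (∀ i1 i2 j, i1 < i2 → j < l.getD i2 0 → T i1 j < T i2 j) ∧
  (∀ i j, l.getD i 0 ≤ j → T i j = 0)

/-- The tableau `T` of shape `l` has content `ν`: for every `k`, the number of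
cells of the diagram of `l` whose entry is `k` equals the `(k+1)`-st part of `ν`. -/
def HasContent (l : List ℕ) (T : ℕ → ℕ → ℕ) (ν : List ℕ) : Prop :=
  ∀ k, Nat.card {c : ℕ × ℕ // c.2 < l.getD c.1 0 ∧ T c.1 c.2 = k} = ν.getD k 0

/-- The Kostka number `K_{l,ν}`: the number of semistandard Young tableaux of
shape `l` and content `ν`. -/
noncomputable def kostka (l ν : List ℕ) : ℕ :=
  Nat.card {T : ℕ → ℕ → ℕ // IsSSYT l T ∧ HasContent l T ν}

/-- `f^λ`, the number of standard Young tableaux of shape `l`. -/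
noncomputable def fSYT (l : List ℕ) : ℕ := kostka l (List.replicate l.sum 1)

/-- Dominance order: all partial sums of `l` are at most those of `m`. -/
def DomLE (l m : List ℕ) : Prop := ∀ k, (l.take k).sum ≤ (m.take k).sum

/-- The standard immersion order: dominance together with `f^λ ≤ f^μ`. -/
def StdLE (l m : List ℕ) : Prop := DomLE l m ∧ fSYT l ≤ fSYT m

/-- Strict standard immersion order. -/
def StdLT (l m : List ℕ) : Prop := StdLE l m ∧ l ≠ m

/-- `m` covers `l` in the standard immersion poset on partitions of `n`. -/
def StdCovBy (n : ℕ) (l m : List ℕ) : Prop :=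
  StdLT l m ∧ ∀ ν, IsPartitionOf n ν → StdLT l ν → ¬ StdLT ν m

/-- `l` is a maximal element of the standard immersion poset on partitions of `n`. -/
def StdMaximal (n : ℕ) (l : List ℕ) : Prop :=
  ∀ m, IsPartitionOf n m → m ≠ l → ¬ StdLE l m

/-- The immersion order on partitions of `n`: `l ≤_I m` iff
`K_{l,α} ≤ K_{m,α}` for every partition `α` of `n`. -/
def ImmersionLE (n : ℕ) (l m : List ℕ) : Prop :=
  ∀ ν, IsPartitionOf n ν → kostka l ν ≤ kostka m ν

/-- Strict immersion order. -/
def ImmersionLT (n : ℕ) (l m : List ℕ) : Prop := ImmersionLE n l m ∧ l ≠ m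

/-- `m` covers `l` in the immersion poset on partitions of `n`. -/
def ImmersionCovBy (n : ℕ) (l m : List ℕ) : Prop :=
  ImmersionLT n l m ∧ ∀ ν, IsPartitionOf n ν → ImmersionLT n l ν → ¬ ImmersionLT n ν m

/-!
The chain consists of hooks `(a + 1, 1 ^ b)`. A semistandard hook tableau whose content is a
composition `ν` with `ℓ` parts has the least letter in its corner and is determined by the set of
letters in its leg, which may be any `b` of the other `ℓ - 1` letters. Hence its Kostka number is
`(ℓ - 1).choose b`. Moving one cell from the leg of the hook `(a + 1, 1 ^ (b + 1))` to its first
row, where `a ≤ b`, does not decrease this binomial coefficient for any partition `ν` of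
`n = a + b + 2`, because `ℓ - 1 ≤ n - 1 ≤ 2 * b + 1`.
-/

theorem choose_succ_le_choose {m k : ℕ} (h : m ≤ 2 * k + 1) :
    m.choose (k + 1) ≤ m.choose k := by
  refine Nat.le_of_mul_le_mul_right (c := k + 1) ?_ k.succ_pos
  rw [Nat.choose_succ_right_eq]
  exact Nat.mul_le_mul_left _ (by omega)

theorem getD_zero_le_of_mem {α : Type*} [Preorder α] {l : List α} (hl : l.SortedLE) {x d : α}
    (hx : x ∈ l) : l.getD 0 d ≤ x := by
  obtain ⟨i, hi, rfl⟩ := List.getElem_of_mem hx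
  rw [List.getD_eq_getElem l d (i.zero_le.trans_lt hi)]
  exact hl.getElem_le_getElem_of_le i.zero_le

/-- The multiset of letters prescribed by the content `ν`, with `k` occurring `ν.getD k 0` times. -/
def contentMultiset (ν : List ℕ) : Multiset ℕ :=
  ∑ k ∈ range ν.length, Multiset.replicate (ν.getD k 0) k

theorem count_contentMultiset (ν : List ℕ) (k : ℕ) :
    (contentMultiset ν).count k = ν.getD k 0 := by
  simp only [contentMultiset, Multiset.count_sum', Multiset.count_replicate, sum_ite_eq', mem_range]
  split_ifs with hk
  · rfl
  · exact (List.getD_eq_default _ _ (not_lt.1 hk)).symm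

theorem card_contentMultiset (ν : List ℕ) : (contentMultiset ν).card = ν.sum := by
  simp [contentMultiset, sum_range, ← Fin.sum_univ_getElem]

theorem mem_contentMultiset {ν : List ℕ} (hpos : ∀ x ∈ ν, 0 < x) {k : ℕ} :
    k ∈ contentMultiset ν ↔ k < ν.length := by
  rw [← Multiset.count_pos, count_contentMultiset]
  refine ⟨fun h ↦ ?_, fun h ↦ ?_⟩
  · contrapose! h
    exact (List.getD_eq_default _ _ h).le
  · rw [List.getD_eq_getElem _ _ h]
    exact hpos _ (List.getElem_mem h)

theorem hasContent_iff_map_eq_contentMultiset {l ν : List ℕ} {T : ℕ → ℕ → ℕ}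
    {cells : Finset (ℕ × ℕ)} (hcells : ∀ c, c ∈ cells ↔ c.2 < l.getD c.1 0) :
    HasContent l T ν ↔ cells.val.map (fun c ↦ T c.1 c.2) = contentMultiset ν := by
  refine Iff.trans (forall_congr' fun k ↦ ?_) Multiset.ext.symm
  rw [count_contentMultiset, Multiset.count_map,
    Nat.subtype_card (cells.filter fun c ↦ k = T c.1 c.2) (by simp [hcells, eq_comm])]
  rfl

/-- The hook partition `(a | b)` in Frobenius notation: arm length `a`, leg length `b`, hence shape
`(a + 1, 1 ^ b)`. -/
def hook (a b : ℕ) : List ℕ := (a + 1) :: List.replicate b 1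

theorem isPartitionOf_hook (a b : ℕ) : IsPartitionOf (a + b + 1) (hook a b) := by
  refine ⟨?_, ?_, ?_⟩
  · simp [hook, List.pairwise_replicate]
  · simp [hook]
  · simp only [hook, List.sum_cons, List.sum_replicate, smul_eq_mul]
    omega

theorem lt_getD_hook_zero {a b j : ℕ} : j < (hook a b).getD 0 0 ↔ j < a + 1 := Iff.rfl

theorem lt_getD_hook_succ {a b i j : ℕ} : j < (hook a b).getD (i + 1) 0 ↔ i < b ∧ j = 0 := by
  by_cases hi : i < b <;> simp [hook, List.getD_eq_getElem?_getD, hi]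

/-- The first row of a tableau `T` of shape `hook a b`, corner included. -/
def hookRow (a : ℕ) (T : ℕ → ℕ → ℕ) : List ℕ := (List.range (a + 1)).map (T 0)

/-- The first column of a tableau `T` of shape `hook a b`, corner excluded. -/
def hookLeg (b : ℕ) (T : ℕ → ℕ → ℕ) : List ℕ := (List.range b).map fun i ↦ T (i + 1) 0

/-- The filling with first row `R` and first column `C` below the corner, the inverse construction
to `hookRow` and `hookLeg`. Like every `IsSSYT`, it is `0` outside of the diagram. -/
def hookTableau (R C : List ℕ) : ℕ → ℕ → ℕ
  | 0, j => R.getD j 0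
  | i + 1, 0 => C.getD i 0
  | _ + 1, _ + 1 => 0

theorem hookRow_hookTableau {a : ℕ} {R : List ℕ} (hR : R.length = a + 1) (C : List ℕ) :
    hookRow a (hookTableau R C) = R := by
  refine List.ext_getElem (by simp [hookRow, hR]) fun j _ hj ↦ ?_
  simp [hookRow, hookTableau, hj]

theorem hookLeg_hookTableau {b : ℕ} {C : List ℕ} (hC : C.length = b) (R : List ℕ) :
    hookLeg b (hookTableau R C) = C := by
  refine List.ext_getElem (by simp [hookLeg, hC]) fun i _ hi ↦ ?_
  simp [hookLeg, hookTableau, hi]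

theorem hasContent_hook_iff {a b : ℕ} {T : ℕ → ℕ → ℕ} {ν : List ℕ} :
    HasContent (hook a b) T ν ↔
      (hookRow a T : Multiset ℕ) + (hookLeg b T : Multiset ℕ) = contentMultiset ν := by
  let row : Finset (ℕ × ℕ) := (range (a + 1)).map (.sectR 0 ℕ)
  let leg : Finset (ℕ × ℕ) := (range b).map ((addRightEmbedding 1).trans (.sectL ℕ 0))
  have hdisj : Disjoint row leg := by
    simp [row, leg, disjoint_left]
  have hcells : ∀ c, c ∈ row.disjUnion leg hdisj ↔ c.2 < (hook a b).getD c.1 0 := by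
    rintro ⟨_ | i, j⟩
    · rw [lt_getD_hook_zero]
      simp [row, leg]
    · rw [lt_getD_hook_succ]
      simp [row, leg, eq_comm]
  have hmap : (row.disjUnion leg hdisj).val.map (fun c ↦ T c.1 c.2) =
      (hookRow a T : Multiset ℕ) + (hookLeg b T : Multiset ℕ) := by
    rw [disjUnion, Multiset.map_add, map_val, map_val, Multiset.map_map, Multiset.map_map]
    rfl
  rw [hasContent_iff_map_eq_contentMultiset hcells, hmap]

section HookTableaux

variable {a b : ℕ} {T : ℕ → ℕ → ℕ}

theorem IsSSYT.sortedLE_hookRow (hT : IsSSYT (hook a b) T) : (hookRow a T).SortedLE := by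
  refine List.sortedLE_of_getElem_le_getElem_of_le fun j₁ j₂ _ hj₂ hj ↦ ?_
  simp only [hookRow, List.getElem_map, List.getElem_range]
  exact hT.1 0 j₁ j₂ hj (lt_getD_hook_zero.2 (by simpa [hookRow] using hj₂))

theorem IsSSYT.sortedLT_hookLeg (hT : IsSSYT (hook a b) T) : (hookLeg b T).SortedLT := by
  refine List.sortedLT_of_getElem_lt_getElem_of_lt fun i₁ i₂ _ hi₂ hi ↦ ?_
  simp only [hookLeg, List.getElem_map, List.getElem_range]
  exact hT.2.1 (i₁ + 1) (i₂ + 1) 0 (Nat.succ_lt_succ hi)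
    (lt_getD_hook_succ.2 ⟨by simpa [hookLeg] using hi₂, rfl⟩)

theorem IsSSYT.corner_lt_of_mem_hookLeg (hT : IsSSYT (hook a b) T) {x : ℕ}
    (hx : x ∈ hookLeg b T) : T 0 0 < x := by
  obtain ⟨i, hi, rfl⟩ := List.mem_map.1 hx
  exact hT.2.1 0 (i + 1) 0 i.succ_pos (lt_getD_hook_succ.2 ⟨List.mem_range.1 hi, rfl⟩)

theorem IsSSYT.hookTableau_hookRow_hookLeg (hT : IsSSYT (hook a b) T) :
    hookTableau (hookRow a T) (hookLeg b T) = T := by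
  funext i j
  by_cases hij : j < (hook a b).getD i 0
  · match i, j with
    | 0, j => simp [hookTableau, hookRow, lt_getD_hook_zero.1 hij]
    | i + 1, 0 => simp [hookTableau, hookLeg, (lt_getD_hook_succ.1 hij).1]
    | i + 1, j + 1 => exact absurd (lt_getD_hook_succ.1 hij).2 j.succ_ne_zero
  · rw [hT.2.2 i j (not_lt.1 hij)]
    match i, j with
    | 0, j =>
      rw [lt_getD_hook_zero] at hij
      exact List.getD_eq_default _ _ (by simpa [hookRow] using hij)
    | i + 1, 0 =>
      rw [lt_getD_hook_succ] at hij
      exact List.getD_eq_default _ _ (by simpa [hookLeg] using hij)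
    | i + 1, j + 1 => rfl

theorem isSSYT_hookTableau {R C : List ℕ} (hRa : R.length = a + 1) (hCb : C.length = b)
    (hR : R.SortedLE) (hC : C.SortedLT) (hRC : ∀ x ∈ C, R.getD 0 0 < x) :
    IsSSYT (hook a b) (hookTableau R C) := by
  subst hCb
  refine ⟨fun i j₁ j₂ hj hj₂ ↦ ?_, fun i₁ i₂ j hi hj ↦ ?_, fun i j hj ↦ ?_⟩
  · match i with
    | 0 =>
      rw [lt_getD_hook_zero, ← hRa] at hj₂
      simp only [hookTableau, List.getD_eq_getElem R 0 hj₂,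
        List.getD_eq_getElem R 0 (hj.trans_lt hj₂)]
      exact hR.getElem_le_getElem_of_le hj
    | i + 1 =>
      obtain rfl := (lt_getD_hook_succ.1 hj₂).2
      rw [Nat.le_zero.1 hj]
  · obtain ⟨i₂, rfl⟩ := Nat.exists_eq_add_one_of_ne_zero hi.ne_bot
    obtain ⟨hi₂, rfl⟩ := lt_getD_hook_succ.1 hj
    match i₁ with
    | 0 =>
      simp only [hookTableau, List.getD_eq_getElem C 0 hi₂]
      exact hRC _ (List.getElem_mem hi₂)
    | i₁ + 1 =>
      have hlt : i₁ < i₂ := Nat.lt_of_succ_lt_succ hi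
      simp only [hookTableau, List.getD_eq_getElem C 0 hi₂,
        List.getD_eq_getElem C 0 (hlt.trans hi₂)]
      exact hC.getElem_lt_getElem_of_lt hlt
  · match i, j with
    | 0, j => exact List.getD_eq_default _ _ (hRa.trans_le hj)
    | i + 1, 0 =>
      rw [← not_lt, lt_getD_hook_succ] at hj
      exact List.getD_eq_default _ _ (by simpa using hj)
    | i + 1, j + 1 => rfl

end HookTableaux

section Kostka

variable {a b : ℕ} {ν : List ℕ}

theorem toFinset_hookLeg_mem_powersetCard (hpos : ∀ x ∈ ν, 0 < x) {T : ℕ → ℕ → ℕ}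
    (hT : IsSSYT (hook a b) T) (hTν : HasContent (hook a b) T ν) :
    (hookLeg b T).toFinset ∈ powersetCard b (Ico 1 ν.length) := by
  refine mem_powersetCard.2 ⟨fun x hx ↦ ?_, ?_⟩
  · rw [List.mem_toFinset] at hx
    have hxν : x ∈ contentMultiset ν := by
      rw [← hasContent_hook_iff.1 hTν]
      exact Multiset.mem_add.2 (.inr hx)
    exact mem_Ico.2 ⟨Nat.one_le_of_lt (hT.corner_lt_of_mem_hookLeg hx),
      (mem_contentMultiset hpos).1 hxν⟩
  · rw [List.toFinset_card_of_nodup hT.sortedLT_hookLeg.nodup, hookLeg, List.length_map,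
      List.length_range]

/-- The hook filling of content `ν` whose leg carries the set `S` of letters; all remaining letters
go to the first row. -/
def hookTableauOfLeg (ν : List ℕ) (S : Finset ℕ) : ℕ → ℕ → ℕ :=
  hookTableau ((contentMultiset ν - S.val).sort (· ≤ ·)) (S.sort (· ≤ ·))

theorem hookTableauOfLeg_toFinset_hookLeg {T : ℕ → ℕ → ℕ} (hT : IsSSYT (hook a b) T)
    (hTν : HasContent (hook a b) T ν) : hookTableauOfLeg ν (hookLeg b T).toFinset = T := by
  have hleg : (hookLeg b T).toFinset.val = hookLeg b T := by
    rw [List.toFinset_val, hT.sortedLT_hookLeg.nodup.dedup]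
  have hrow : contentMultiset ν - (hookLeg b T).toFinset.val = hookRow a T := by
    rw [← hasContent_hook_iff.1 hTν, hleg, add_tsub_cancel_right]
  rw [hookTableauOfLeg, hrow, ← sort_val, hleg, Multiset.coe_sort, Multiset.coe_sort,
    List.mergeSort_eq_self _ hT.sortedLE_hookRow.pairwise,
    List.mergeSort_eq_self _ hT.sortedLT_hookLeg.sortedLE.pairwise, hT.hookTableau_hookRow_hookLeg]

theorem val_le_contentMultiset (hpos : ∀ x ∈ ν, 0 < x) {S : Finset ℕ}
    (hS : S ⊆ range ν.length) : S.val ≤ contentMultiset ν :=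
  (Multiset.le_iff_subset S.nodup).2 fun _ hk ↦
    (mem_contentMultiset hpos).2 (mem_range.1 (hS hk))

theorem length_sort_contentMultiset_sub (hpos : ∀ x ∈ ν, 0 < x) {S : Finset ℕ}
    (hS : S ⊆ range ν.length) :
    ((contentMultiset ν - S.val).sort (· ≤ ·)).length = ν.sum - #S := by
  rw [Multiset.length_sort, Multiset.card_sub (val_le_contentMultiset hpos hS),
    card_contentMultiset, card_val]

theorem mem_contentMultiset_sub (hpos : ∀ x ∈ ν, 0 < x) {S : Finset ℕ} {k : ℕ}
    (hk : k < ν.length) (hkS : k ∉ S) : k ∈ contentMultiset ν - S.val := by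
  rw [Multiset.mem_sub, Multiset.count_eq_zero_of_notMem hkS, Multiset.count_pos]
  exact (mem_contentMultiset hpos).2 hk

theorem isSSYT_hookTableauOfLeg (hpos : ∀ x ∈ ν, 0 < x) {S : Finset ℕ}
    (hS : S ⊆ Ico 1 ν.length) (hsum : ν.sum = a + #S + 1) :
    IsSSYT (hook a #S) (hookTableauOfLeg ν S) := by
  have hSν : S ⊆ range ν.length := fun x hx ↦ mem_range.2 (mem_Ico.1 (hS hx)).2
  have hlength := length_sort_contentMultiset_sub hpos hSν
  have hsorted : ((contentMultiset ν - S.val).sort (· ≤ ·)).SortedLE :=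
    (Multiset.pairwise_sort _ _).sortedLE
  refine isSSYT_hookTableau (by omega) (length_sort _) hsorted (sortedLT_sort S) fun x hx ↦ ?_
  obtain ⟨hx_pos, hxν⟩ := mem_Ico.1 (hS ((mem_sort _).1 hx))
  have hzero : 0 ∈ contentMultiset ν - S.val :=
    mem_contentMultiset_sub hpos (by omega) fun h ↦ by simpa using hS h
  exact (getD_zero_le_of_mem hsorted ((Multiset.mem_sort _).2 hzero)).trans_lt hx_pos

theorem hookLeg_hookTableauOfLeg (ν : List ℕ) (S : Finset ℕ) :
    hookLeg #S (hookTableauOfLeg ν S) = S.sort (· ≤ ·) :=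
  hookLeg_hookTableau (length_sort _) _

theorem hasContent_hookTableauOfLeg (hpos : ∀ x ∈ ν, 0 < x) {S : Finset ℕ}
    (hS : S ⊆ range ν.length) (hsum : ν.sum = a + #S + 1) :
    HasContent (hook a #S) (hookTableauOfLeg ν S) ν := by
  have hlength := length_sort_contentMultiset_sub hpos hS
  rw [hasContent_hook_iff, hookLeg_hookTableauOfLeg, hookTableauOfLeg,
    hookRow_hookTableau (by omega), Multiset.sort_eq, sort_eq]
  exact tsub_add_cancel_of_le (val_le_contentMultiset hpos hS)

theorem kostka_hook (hpos : ∀ x ∈ ν, 0 < x) (hsum : ν.sum = a + b + 1) :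
    kostka (hook a b) ν = (ν.length - 1).choose b := by
  have htableau : ∀ S ∈ powersetCard b (Ico 1 ν.length),
      IsSSYT (hook a b) (hookTableauOfLeg ν S) ∧
        HasContent (hook a b) (hookTableauOfLeg ν S) ν := by
    intro S hS
    obtain ⟨hSIco, rfl⟩ := mem_powersetCard.1 hS
    have hSν : S ⊆ range ν.length := fun x hx ↦ mem_range.2 (mem_Ico.1 (hSIco hx)).2
    exact ⟨isSSYT_hookTableauOfLeg hpos hSIco hsum, hasContent_hookTableauOfLeg hpos hSν hsum⟩
  let e : {T // IsSSYT (hook a b) T ∧ HasContent (hook a b) T ν} ≃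
      powersetCard b (Ico 1 ν.length) :=
    { toFun T := ⟨(hookLeg b T.1).toFinset,
        toFinset_hookLeg_mem_powersetCard hpos T.2.1 T.2.2⟩
      invFun S := ⟨hookTableauOfLeg ν S, htableau S S.2⟩
      left_inv T := Subtype.ext (hookTableauOfLeg_toFinset_hookLeg T.2.1 T.2.2)
      right_inv S := Subtype.ext <| by
        obtain ⟨S, hS⟩ := S
        obtain ⟨-, rfl⟩ := mem_powersetCard.1 hS
        simp only [hookLeg_hookTableauOfLeg, sort_toFinset] }
  rw [kostka, Nat.card_congr e, Nat.card_eq_finsetCard, card_powersetCard, Nat.card_Ico]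

end Kostka

theorem immersionLT_hook {a b : ℕ} (hab : a ≤ b) :
    ImmersionLT (a + b + 2) (hook a (b + 1)) (hook (a + 1) b) := by
  refine ⟨fun ν hν ↦ ?_, by simp [hook]⟩
  obtain ⟨-, hpos, hsum⟩ := hν
  have hlength : ν.length ≤ ν.sum := List.length_le_sum_of_one_le ν hpos
  rw [kostka_hook hpos (a := a) (b := b + 1) (by omega),
    kostka_hook hpos (a := a + 1) (b := b) (by omega)]
  exact choose_succ_le_choose (by omega)

/-- For every `n ≥ 1` the immersion poset on partitions of `n`
contains a chain of length `⌊n/2⌋`; in particular its rank is at least `⌊n/2⌋`. -/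
theorem immersion_poset_chain (n : ℕ) (hn : 1 ≤ n) :
    ∃ μ : ℕ → List ℕ, (∀ j, j ≤ n / 2 → IsPartitionOf n (μ j)) ∧
      ∀ j, j < n / 2 → ImmersionLT n (μ j) (μ (j + 1)) := by
  refine ⟨fun j ↦ hook j (n - 1 - j), fun j hj ↦ ?_, fun j hj ↦ ?_⟩
  · have hpartition := isPartitionOf_hook j (n - 1 - j)
    rwa [show j + (n - 1 - j) + 1 = n by omega] at hpartition
  · have hlt := immersionLT_hook (a := j) (b := n - 2 - j) (by omega)
    rwa [show j + (n - 2 - j) + 2 = n by omega, show n - 2 - j + 1 = n - 1 - j by omega,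
      show n - 2 - j = n - 1 - (j + 1) by omega] at hlt
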